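/- arXiv:2510.05076 — 2 statements merged into one kernel-verified Lean document; each statement's English description precedes it below -/
import Mathlib

section
/- Let n ≥ 3, let r be an integer with 1 ≤ r ≤ n − 2, and let p₁, …, pₙ be distinct prime numbers. For each i ∈ {1, …, n}, let bᵢ be the unique integer with 0 ≤ bᵢ < pᵢ and bᵢ · ∏_{j ≠ i} pⱼ ≡ −1 (mod pᵢ). If there exists k ∈ {1, …, n} such that ∑_{i ≠ k} bᵢ/pᵢ ≥ r, then the dilation rΔ(p₁, …, pₙ) is not normal. -/
/-- A point of `ℝⁿ` is a lattice point if all its coordinates are integers. -/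
def IsLatticePoint {n : ℕ} (x : Fin n → ℝ) : Prop := ∀ i, ∃ z : ℤ, x i = (z : ℝ)

/-- The `k`-th dilation `kS = {k • x : x ∈ S}` of a set `S ⊆ ℝⁿ`. -/
def dilate {n : ℕ} (k : ℕ) (P : Set (Fin n → ℝ)) : Set (Fin n → ℝ) :=
  (fun x => (k : ℝ) • x) '' P

/-- Every lattice point of `kP` is a sum of `k` lattice points of `P`. -/
def IsIDP {n : ℕ} (k : ℕ) (P : Set (Fin n → ℝ)) : Prop :=
  ∀ x ∈ dilate k P, IsLatticePoint x →
    ∃ f : Fin k → (Fin n → ℝ), (∀ i, f i ∈ P ∧ IsLatticePoint (f i)) ∧ x = ∑ i, f i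

/-- A polytope is normal if for every `k ≥ 1` every lattice point of `kP`
is a sum of `k` lattice points of `P`. -/
def IsNormal {n : ℕ} (P : Set (Fin n → ℝ)) : Prop := ∀ k : ℕ, 1 ≤ k → IsIDP k P

/-- A polytope is very ample if there is `k₀` such that for every `k ≥ k₀` every
lattice point of `kP` is a sum of `k` lattice points of `P`. -/
def IsVeryAmple {n : ℕ} (P : Set (Fin n → ℝ)) : Prop :=
  ∃ k₀ : ℕ, ∀ k : ℕ, k₀ ≤ k → IsIDP k P

/-- The rectangular simplex `Δ(λ) = conv{0, λ₁e₁, …, λₙeₙ}`. -/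
def rectSimplex {n : ℕ} (lam : Fin n → ℕ) : Set (Fin n → ℝ) :=
  convexHull ℝ (insert 0 (Set.range fun i => Pi.single i ((lam i : ℝ))))

/-- An edge of `P`: a segment between two distinct extreme points of `P`
which is an extreme subset of `P`. -/
def IsEdge {n : ℕ} (P : Set (Fin n → ℝ)) (v w : Fin n → ℝ) : Prop :=
  v ≠ w ∧ v ∈ P.extremePoints ℝ ∧ w ∈ P.extremePoints ℝ ∧
    IsExtreme ℝ P (segment ℝ v w)

/-- `P` has at least `k` lattice points on every edge. -/
def LPE {n : ℕ} (k : ℕ) (P : Set (Fin n → ℝ)) : Prop :=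
  ∀ v w, IsEdge P v w →
    ∃ S : Finset (Fin n → ℝ), k ≤ S.card ∧ ∀ x ∈ S, x ∈ segment ℝ v w ∧ IsLatticePoint x

/-- The normality index: the least `k₀` such that `kP` is normal for all `k ≥ k₀`. -/
noncomputable def munorm {n : ℕ} (P : Set (Fin n → ℝ)) : ℕ :=
  sInf {k₀ : ℕ | ∀ k : ℕ, k₀ ≤ k → IsNormal (dilate k P)}

/-- Almost 1-normality: with `L = lcm λᵢ`, `Lᵢ = L/λᵢ`, `d = gcd Lᵢ`, the number
`L - d` lies in the additive submonoid of `ℕ` generated by the `Lᵢ`. -/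
def IsA1N {n : ℕ} (lam : Fin n → ℕ) : Prop :=
  Finset.univ.lcm lam - Finset.univ.gcd (fun i => Finset.univ.lcm lam / lam i) ∈
    AddSubmonoid.closure (Set.range fun i => Finset.univ.lcm lam / lam i)

theorem mem_rectSimplex_iff {n : ℕ} (p : Fin n → ℕ) (hp : ∀ i, 0 < p i) (x : Fin n → ℝ) :
    x ∈ rectSimplex p ↔ (∀ i, 0 ≤ x i) ∧ ∑ i, x i / (p i : ℝ) ≤ 1 := by
  have hp' : ∀ i, (0 : ℝ) < p i := fun i => by exact_mod_cast hp i
  constructor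
  · intro hx
    have hc : Convex ℝ {y : Fin n → ℝ | (∀ i, 0 ≤ y i) ∧ ∑ i, y i / (p i : ℝ) ≤ 1} := by
      intro y hy z hz a c ha hc hac
      refine ⟨fun i => ?_, ?_⟩
      · have h1 := hy.1 i
        have h2 := hz.1 i
        simp only [Pi.add_apply, Pi.smul_apply, smul_eq_mul]
        positivity
      · have : ∑ i, (a • y + c • z) i / (p i : ℝ)
            = a * ∑ i, y i / (p i : ℝ) + c * ∑ i, z i / (p i : ℝ) := by
          rw [Finset.mul_sum, Finset.mul_sum, ← Finset.sum_add_distrib]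
          refine Finset.sum_congr rfl fun i _ => ?_
          simp only [Pi.add_apply, Pi.smul_apply, smul_eq_mul]
          ring
        rw [this]
        have h1 := mul_le_mul_of_nonneg_left hy.2 ha
        have h2 := mul_le_mul_of_nonneg_left hz.2 hc
        linarith
    refine convexHull_min ?_ hc hx
    intro y hy
    rcases hy with rfl | ⟨j, rfl⟩
    · simp
    · refine ⟨fun i => ?_, ?_⟩
      · by_cases h : i = j
        · subst h; simp
        · simp [h]
      · rw [Finset.sum_eq_single j]
        · simp [(hp' j).ne']
        · intro i _ hij; simp [hij]
        · simp
  · rintro ⟨h0, h1⟩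
    have key := (convex_convexHull ℝ
      (insert 0 (Set.range fun i => Pi.single i ((p i : ℝ))) : Set (Fin n → ℝ))).sum_mem
      (t := (Finset.univ : Finset (Option (Fin n))))
      (w := fun o => o.elim (1 - ∑ i, x i / (p i : ℝ)) (fun i => x i / (p i : ℝ)))
      (z := fun o => o.elim 0 (fun i => Pi.single i ((p i : ℝ)))) ?_ ?_ ?_
    · unfold rectSimplex
      convert key using 1
      rw [Fintype.sum_option]
      ext j
      simp only [Option.elim, smul_zero, zero_add, Finset.sum_apply, Pi.smul_apply, smul_eq_mul]
      rw [Finset.sum_eq_single j]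
      · simp [(hp' j).ne']
      · intro i _ hij; simp [Pi.single_apply, hij.symm]
      · simp
    · rintro (_ | i) _
      · simpa using h1
      · exact div_nonneg (h0 i) (hp' i).le
    · rw [Fintype.sum_option]; simp
    · rintro (_ | i) _
      · exact subset_convexHull _ _ (Set.mem_insert _ _)
      · exact subset_convexHull _ _ (Set.mem_insert_of_mem _ ⟨i, rfl⟩)

theorem mem_dilate_iff {n : ℕ} (p : Fin n → ℕ) (hp : ∀ i, 0 < p i) (r : ℕ) (hr : 0 < r)
    (x : Fin n → ℝ) :
    x ∈ dilate r (rectSimplex p) ↔ (∀ i, 0 ≤ x i) ∧ ∑ i, x i / (p i : ℝ) ≤ r := by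
  have hr' : (0 : ℝ) < r := by exact_mod_cast hr
  constructor
  · rintro ⟨y, hy, rfl⟩
    rw [mem_rectSimplex_iff p hp] at hy
    refine ⟨fun i => mul_nonneg hr'.le (hy.1 i), ?_⟩
    have : ∑ i, ((r : ℝ) • y) i / (p i : ℝ) = r * ∑ i, y i / (p i : ℝ) := by
      rw [Finset.mul_sum]
      refine Finset.sum_congr rfl fun i _ => ?_
      simp only [Pi.smul_apply, smul_eq_mul]
      ring
    show ∑ i, ((r : ℝ) • y) i / (p i : ℝ) ≤ r
    rw [this]
    nlinarith [hy.2]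
  · rintro ⟨h0, h1⟩
    refine ⟨(r : ℝ)⁻¹ • x, ?_, by simp [smul_smul, hr'.ne']⟩
    rw [mem_rectSimplex_iff p hp]
    refine ⟨fun i => mul_nonneg (inv_nonneg.2 hr'.le) (h0 i), ?_⟩
    have : ∑ i, ((r : ℝ)⁻¹ • x) i / (p i : ℝ) = (r : ℝ)⁻¹ * ∑ i, x i / (p i : ℝ) := by
      rw [Finset.mul_sum]
      refine Finset.sum_congr rfl fun i _ => ?_
      simp only [Pi.smul_apply, smul_eq_mul]
      ring
    rw [this, inv_mul_le_iff₀ hr']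
    linarith

theorem weight_eq {n : ℕ} (p : Fin n → ℕ) (hp : ∀ i, 0 < p i) (z : Fin n → ℤ) :
    ((∑ i, z i * ∏ j ∈ Finset.univ.erase i, (p j : ℤ) : ℤ) : ℝ)
      = (∑ i, (z i : ℝ) / (p i : ℝ)) * ((∏ j, (p j : ℤ) : ℤ) : ℝ) := by
  rw [Finset.sum_mul, Int.cast_sum]
  refine Finset.sum_congr rfl fun i _ => ?_
  have hp' : (0 : ℝ) < p i := by exact_mod_cast hp i
  rw [← Finset.mul_prod_erase Finset.univ _ (Finset.mem_univ i)]
  push_cast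
  field_simp

theorem mem_int_iff {n : ℕ} (p : Fin n → ℕ) (hp : ∀ i, 0 < p i) (r : ℕ) (hr : 0 < r)
    (z : Fin n → ℤ) :
    (fun i => (z i : ℝ)) ∈ dilate r (rectSimplex p) ↔ (∀ i, 0 ≤ z i) ∧
      ∑ i, z i * ∏ j ∈ Finset.univ.erase i, (p j : ℤ) ≤ r * ∏ j, (p j : ℤ) := by
  have hL : (0 : ℤ) < ∏ j, (p j : ℤ) := Finset.prod_pos fun i _ => by exact_mod_cast hp i
  have hL' : (0 : ℝ) < ((∏ j, (p j : ℤ) : ℤ) : ℝ) := by exact_mod_cast hL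
  rw [mem_dilate_iff p hp r hr]
  refine and_congr (by simp) ?_
  rw [← Int.cast_le (R := ℝ), weight_eq p hp z, Int.cast_mul, Int.cast_natCast,
    mul_le_mul_iff_left₀ hL']

theorem dilate_dilate {n : ℕ} (k r : ℕ) (P : Set (Fin n → ℝ)) :
    dilate k (dilate r P) = dilate (k * r) P := by
  ext x
  simp [dilate, smul_smul]

/-- Let `p₁, …, pₙ` be distinct primes, `1 ≤ r ≤ n - 2`, and for
each `i` let `bᵢ` be the unique integer in `[0, pᵢ)` with
`bᵢ · ∏_{j ≠ i} pⱼ ≡ -1 (mod pᵢ)`. If `∑_{i ≠ k} bᵢ/pᵢ ≥ r` for some `k`, then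
`rΔ(p₁, …, pₙ)` is not normal. -/
theorem stmt_15 (n : ℕ) (hn : 3 ≤ n) (r : ℕ) (hr1 : 1 ≤ r) (hr2 : r ≤ n - 2)
    (p : Fin n → ℕ) (hp : ∀ i, (p i).Prime) (hinj : Function.Injective p)
    (b : Fin n → ℕ) (hb : ∀ i, b i < p i)
    (hbmod : ∀ i, Int.ModEq (p i)
      ((b i : ℤ) * ∏ j ∈ Finset.univ.erase i, (p j : ℤ)) (-1))
    (hk : ∃ k, (r : ℝ) ≤ ∑ i ∈ Finset.univ.erase k, (b i : ℝ) / (p i : ℝ)) :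
    ¬ IsNormal (dilate r (rectSimplex p)) := by
  have hp0 : ∀ i, 0 < p i := fun i => (hp i).pos
  have hL : (0 : ℤ) < ∏ j, (p j : ℤ) := Finset.prod_pos fun i _ => by exact_mod_cast hp0 i
  have hLi : ∀ i, (0 : ℤ) ≤ ∏ j ∈ Finset.univ.erase i, (p j : ℤ) := fun i =>
    Finset.prod_nonneg fun j _ => by positivity
  -- the weight of `b` is at least `r L`
  have hwb : (r : ℤ) * ∏ j, (p j : ℤ) ≤
      ∑ i, (b i : ℤ) * ∏ j ∈ Finset.univ.erase i, (p j : ℤ) := by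
    obtain ⟨k, hk⟩ := hk
    have h1 : (r : ℝ) ≤ ∑ i, (((b i : ℤ) : ℝ)) / (p i : ℝ) := by
      refine hk.trans ?_
      simp only [Int.cast_natCast]
      exact Finset.sum_le_sum_of_subset_of_nonneg (Finset.erase_subset _ _)
        fun i _ _ => by positivity
    have h2 := weight_eq p hp0 (fun i => (b i : ℤ))
    rw [← Int.cast_le (R := ℝ), h2, Int.cast_mul, Int.cast_natCast]
    exact mul_le_mul_of_nonneg_right h1 (by exact_mod_cast hL.le)
  -- residues of weights
  have hres : ∀ (z : Fin n → ℤ) (i : Fin n),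
      (p i : ℤ) ∣ (∑ i, z i * ∏ j ∈ Finset.univ.erase i, (p j : ℤ))
        - z i * ∏ j ∈ Finset.univ.erase i, (p j : ℤ) := by
    intro z i
    rw [← Finset.add_sum_erase _ _ (Finset.mem_univ i), add_sub_cancel_left]
    refine Finset.dvd_sum fun l hl => Dvd.dvd.mul_left (Finset.dvd_prod_of_mem _ ?_) _
    exact Finset.mem_erase.2 ⟨(Finset.ne_of_mem_erase hl).symm, Finset.mem_univ _⟩
  have hb1 : ∀ i, (p i : ℤ) ∣ (b i : ℤ) * ∏ j ∈ Finset.univ.erase i, (p j : ℤ) + 1 := by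
    intro i
    have := (hbmod i).symm.dvd
    simpa using this
  have hcop : ∀ i j, i ≠ j → IsCoprime (p i : ℤ) (p j : ℤ) := fun i j hij =>
    Nat.isCoprime_iff_coprime.2 ((Nat.coprime_primes (hp i) (hp j)).2 fun h => hij (hinj h))
  have hdvd : (∏ j, (p j : ℤ)) ∣
      (∑ i, (b i : ℤ) * ∏ j ∈ Finset.univ.erase i, (p j : ℤ)) + 1 := by
    refine Finset.prod_dvd_of_coprime (fun i _ j _ hij => hcop i j hij) fun i _ => ?_
    have := dvd_add (hres (fun i => (b i : ℤ)) i) (hb1 i)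
    convert this using 1
    ring
  obtain ⟨m, hm⟩ := hdvd
  have hwb0 : (0 : ℤ) ≤ ∑ i, (b i : ℤ) * ∏ j ∈ Finset.univ.erase i, (p j : ℤ) :=
    Finset.sum_nonneg fun i _ => mul_nonneg (by positivity) (hLi i)
  have hm0 : 0 < m := by
    by_contra h
    push Not at h
    nlinarith
  lift m to ℕ using hm0.le
  have hm1 : 1 ≤ m := by exact_mod_cast hm0
  intro hN
  let i0 : Fin n := ⟨0, by omega⟩
  let c : ℤ := m * r - m
  have hc : 0 ≤ c := by
    have : (1 : ℤ) ≤ r := by exact_mod_cast hr1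
    simp only [c]
    nlinarith
  let x : Fin n → ℤ := fun i => (b i : ℤ) + Pi.single (M := fun _ => ℤ) i0 (c * p i0) i
  have hwx : ∑ i, x i * ∏ j ∈ Finset.univ.erase i, (p j : ℤ) = m * r * ∏ j, (p j : ℤ) - 1 := by
    simp only [x, add_mul, Finset.sum_add_distrib]
    have : ∑ i, Pi.single (M := fun _ => ℤ) i0 (c * p i0) i * ∏ j ∈ Finset.univ.erase i, (p j : ℤ)
        = c * ∏ j, (p j : ℤ) := by
      rw [Finset.sum_eq_single i0]
      · rw [Pi.single_eq_same, mul_assoc,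
          Finset.mul_prod_erase Finset.univ (fun j => (p j : ℤ)) (Finset.mem_univ i0)]
      · intro i _ hi
        simp [hi]
      · simp
    rw [this]
    simp only [c]
    linear_combination hm
  have hx0 : ∀ i, 0 ≤ x i := by
    intro i
    have : (0 : Fin n → ℤ) ≤ Pi.single i0 (c * p i0) := by
      rw [Pi.single_nonneg]; positivity
    have h := this i
    simp only [Pi.zero_apply] at h
    simp only [x]
    positivity
  obtain ⟨f, hf, hsum⟩ := hN m hm1 (fun i => (x i : ℝ)) (by
    rw [dilate_dilate, mem_int_iff p hp0 _ (by positivity)]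
    refine ⟨hx0, ?_⟩
    rw [hwx]
    push_cast
    linarith) (fun i => ⟨x i, rfl⟩)
  choose hfm hfl using hf
  choose g hg using hfl
  have hfg : ∀ l, f l = fun i => (g l i : ℝ) := fun l => funext fun i => hg l i
  have hgm : ∀ l, (∀ i, 0 ≤ g l i) ∧
      ∑ i, g l i * ∏ j ∈ Finset.univ.erase i, (p j : ℤ) ≤ r * ∏ j, (p j : ℤ) := fun l => by
    rw [← mem_int_iff p hp0 r hr1, ← hfg l]
    exact hfm l
  have hxg : ∀ i, x i = ∑ l, g l i := by
    intro i
    have := congrFun hsum i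
    simp only [Finset.sum_apply, hg] at this
    exact_mod_cast this
  have hwsum : ∑ l, ∑ i, g l i * ∏ j ∈ Finset.univ.erase i, (p j : ℤ)
      = m * r * ∏ j, (p j : ℤ) - 1 := by
    rw [← hwx, Finset.sum_comm]
    refine Finset.sum_congr rfl fun i _ => ?_
    rw [hxg, Finset.sum_mul]
  -- the total deficit is one, so some summand has deficit one
  have hdef : ∑ l, ((r : ℤ) * ∏ j, (p j : ℤ)
      - ∑ i, g l i * ∏ j ∈ Finset.univ.erase i, (p j : ℤ)) = 1 := by
    rw [Finset.sum_sub_distrib, hwsum]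
    simp
    ring
  have hnn : ∀ l ∈ Finset.univ, (0 : ℤ) ≤ (r : ℤ) * ∏ j, (p j : ℤ)
      - ∑ i, g l i * ∏ j ∈ Finset.univ.erase i, (p j : ℤ) := fun l _ => by
    linarith [(hgm l).2]
  obtain ⟨l, -, hl⟩ := Finset.exists_ne_zero_of_sum_ne_zero (hdef.trans_ne one_ne_zero)
  have hle := Finset.single_le_sum hnn (Finset.mem_univ l)
  rw [hdef] at hle
  have hpos := hnn l (Finset.mem_univ l)
  have hl1 : ∑ i, g l i * ∏ j ∈ Finset.univ.erase i, (p j : ℤ) = r * ∏ j, (p j : ℤ) - 1 := by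
    omega
  -- congruence forces `g l i ≥ b i`
  have hge : ∀ i, (b i : ℤ) ≤ g l i := by
    intro i
    have h1 := hres (g l) i
    rw [hl1] at h1
    have h2 : (p i : ℤ) ∣ (r : ℤ) * ∏ j, (p j : ℤ) :=
      (Finset.dvd_prod_of_mem _ (Finset.mem_univ i)).mul_left _
    have h3 : (p i : ℤ) ∣ (g l i - b i) * ∏ j ∈ Finset.univ.erase i, (p j : ℤ) := by
      have := dvd_sub (dvd_sub h2 h1) (hb1 i)
      have e : ∀ a g b q : ℤ, a - (a - 1 - g * q) - (b * q + 1) = (g - b) * q := by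
        intros; ring
      rwa [e] at this
    have h4 : IsCoprime (p i : ℤ) (∏ j ∈ Finset.univ.erase i, (p j : ℤ)) :=
      IsCoprime.prod_right fun j hj => hcop i j (Finset.ne_of_mem_erase hj).symm
    obtain ⟨t, ht⟩ := h4.dvd_of_dvd_mul_right h3
    have h5 := (hgm l).1 i
    have h6 : (b i : ℤ) < p i := by exact_mod_cast hb i
    by_contra hlt
    push Not at hlt
    have : t ≤ -1 := by
      by_contra h
      have : 0 ≤ t := by omega
      nlinarith
    nlinarith
  have hfin : ∑ i, (b i : ℤ) * ∏ j ∈ Finset.univ.erase i, (p j : ℤ)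
      ≤ ∑ i, g l i * ∏ j ∈ Finset.univ.erase i, (p j : ℤ) :=
    Finset.sum_le_sum fun i _ => mul_le_mul_of_nonneg_right (hge i) (hLi i)
  linarith
end

section
/- Let n ≥ 3 and let p₁, …, p_{n−1} be distinct prime numbers such that ∑_{i=1}^{n−1} 1/pᵢ ≤ 1. Then the set of prime numbers q with q ∉ {p₁, …, p_{n−1}} such that the rectangular simplex Δ(p₁, …, p_{n−1}, q) is maximally non-normal (i.e. μ_norm(Δ(p₁, …, p_{n−1}, q)) = n − 1) is infinite. -/
/-- The weight `∑ aᵢ/λᵢ`. -/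
noncomputable def sg {n : ℕ} (lam : Fin n → ℕ) (a : Fin n → ℕ) : ℝ := ∑ i, (a i : ℝ) / (lam i : ℝ)

lemma sg_add {n : ℕ} (lam a b : Fin n → ℕ) : sg lam (a + b) = sg lam a + sg lam b := by
  unfold sg
  rw [← Finset.sum_add_distrib]
  refine Finset.sum_congr rfl fun i _ => ?_
  simp only [Pi.add_apply]
  push_cast
  ring

lemma sg_single {n : ℕ} (lam : Fin n → ℕ) (i : Fin n) (c : ℕ) :
    sg lam (Pi.single i c) = (c : ℝ) / lam i := by
  unfold sg
  rw [Finset.sum_eq_single i]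
  · simp
  · intro j _ hj
    simp [Pi.single_eq_of_ne hj]
  · simp

lemma peel_one {n : ℕ} (lam : Fin n → ℕ) (hl : ∀ i, 0 < lam i) (N : ℕ) (hN : n ≤ N + 1)
    (a : Fin n → ℕ) (ha : sg lam a ≤ N + 1) :
    ∃ b c : Fin n → ℕ, a = b + c ∧ sg lam b ≤ 1 ∧ sg lam c ≤ N := by
  by_cases h1 : ∃ i, lam i ≤ a i
  · obtain ⟨i, hi⟩ := h1
    have hle : Pi.single i (lam i) ≤ a := by
      intro j
      by_cases hj : j = i
      · subst hj; simpa using hi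
      · simp [Pi.single_eq_of_ne hj]
    have hs : sg lam (Pi.single i (lam i)) = 1 := by
      rw [sg_single]
      exact div_self (by exact_mod_cast (hl i).ne')
    have he : a = Pi.single i (lam i) + (a - Pi.single i (lam i)) := (add_tsub_cancel_of_le hle).symm
    refine ⟨_, _, he, hs.le, ?_⟩
    rw [he, sg_add, hs] at ha
    linarith
  push Not at h1
  -- take `b` with minimal coordinate sum
  have hex : ∃ s : ℕ, ∃ b c : Fin n → ℕ, ∑ i, b i = s ∧ a = b + c ∧ sg lam c ≤ N :=
    ⟨_, a, 0, rfl, by simp, by simp [sg]⟩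
  classical
  obtain ⟨b, c, hbs, habc, hc⟩ := Nat.find_spec hex
  have hmin := fun s (hs : s < Nat.find hex) => Nat.find_min hex hs
  refine ⟨b, c, habc, ?_, hc⟩
  by_cases hb : ∃ i, b i ≠ 0
  · obtain ⟨i, hi⟩ := hb
    have hle : Pi.single i 1 ≤ b := by
      intro j
      by_cases hj : j = i
      · subst hj; simp; omega
      · simp [Pi.single_eq_of_ne hj]
    have he : b = Pi.single i 1 + (b - Pi.single i 1) := (add_tsub_cancel_of_le hle).symm
    have hsum : ∑ j, b j = 1 + ∑ j, (b - Pi.single i 1 : Fin n → ℕ) j := by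
      conv_lhs => rw [he]
      simp only [Pi.add_apply, Finset.sum_add_distrib]
      simp
    have hnot := hmin (∑ j, (b - Pi.single i 1 : Fin n → ℕ) j) (by omega)
    have hgt : (N : ℝ) < sg lam (c + Pi.single i 1) := by
      by_contra hcon
      exact hnot ⟨_, c + Pi.single i 1, rfl, by rw [habc]; nth_rewrite 1 [he]; ac_rfl,
        not_lt.1 hcon⟩
    rw [sg_add, sg_single] at hgt
    have hna : sg lam a ≤ n - 1 / (lam i : ℝ) := by
      have : sg lam a + sg lam (Pi.single i 1) ≤ n := by
        rw [← sg_add]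
        unfold sg
        calc _ ≤ ∑ j : Fin n, (1 : ℝ) := by
              refine Finset.sum_le_sum fun j _ => ?_
              rw [div_le_one (by exact_mod_cast hl j)]
              have := h1 j
              have h2 : (Pi.single i 1 : Fin n → ℕ) j ≤ 1 := by
                by_cases hj : j = i
                · subst hj; simp
                · simp [Pi.single_eq_of_ne hj]
              simp only [Pi.add_apply]
              exact_mod_cast (by omega)
          _ = n := by simp
      rw [sg_single] at this
      push_cast at this
      linarith
    have hnN : (n : ℝ) ≤ N + 1 := by exact_mod_cast hN
    rw [habc, sg_add] at hna
    push_cast at hgt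
    linarith
  · push Not at hb
    simp [sg, hb]

lemma peel {n : ℕ} (lam : Fin n → ℕ) (hl : ∀ i, 0 < lam i) (N : ℕ) (hN : n ≤ N + 1) (k : ℕ) :
    ∀ (a : Fin n → ℕ), sg lam a ≤ N + k →
    ∃ b c : Fin n → ℕ, a = b + c ∧ sg lam b ≤ k ∧ sg lam c ≤ N := by
  induction k with
  | zero => intro a ha; exact ⟨0, a, by simp, by simp [sg], by simpa using ha⟩
  | succ k ih =>
    intro a ha
    obtain ⟨b, c, h1, h2, h3⟩ := peel_one lam hl (N + k) (by omega) a
      (by push_cast at ha ⊢; linarith)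
    obtain ⟨b', c', h1', h2', h3'⟩ := ih c (by push_cast at h3; linarith)
    refine ⟨b + b', c', by rw [h1, h1', add_assoc], ?_, h3'⟩
    rw [sg_add]; push_cast; linarith

lemma decomp {n : ℕ} (lam : Fin n → ℕ) (hl : ∀ i, 0 < lam i) (k : ℕ) (hk : n ≤ k + 1) (m : ℕ) :
    ∀ (a : Fin n → ℕ), sg lam a ≤ (m + 1) * k →
    ∃ f : Fin (m + 1) → Fin n → ℕ, (∀ i, sg lam (f i) ≤ k) ∧ a = ∑ i, f i := by
  induction m with
  | zero => intro a ha; exact ⟨fun _ => a, fun _ => by simpa using ha, by simp⟩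
  | succ m ih =>
    intro a ha
    obtain ⟨b, c, h1, h2, h3⟩ := peel lam hl ((m + 1) * k)
      (hk.trans (by nlinarith)) k a (by push_cast at ha ⊢; linarith)
    obtain ⟨f, hf, hs⟩ := ih c (by push_cast at h3; exact h3)
    refine ⟨Fin.cons b f, fun i => ?_, ?_⟩
    · refine Fin.cases ?_ (fun j => ?_) i
      · simpa using h2
      · simpa using hf j
    · rw [Fin.sum_univ_succ]; simp [h1, hs]

lemma mem_rect {n : ℕ} (lam : Fin n → ℕ) (hl : ∀ i, 0 < lam i) (x : Fin n → ℝ) :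
    x ∈ rectSimplex lam ↔ (∀ i, 0 ≤ x i) ∧ ∑ i, x i / (lam i : ℝ) ≤ 1 := by
  constructor
  · intro hx
    have hconv : Convex ℝ {x : Fin n → ℝ | (∀ i, 0 ≤ x i) ∧ ∑ i, x i / (lam i : ℝ) ≤ 1} := by
      intro x hx y hy s t hs ht hst
      refine ⟨fun i => ?_, ?_⟩
      · have := hx.1 i
        have := hy.1 i
        simp only [Pi.add_apply, Pi.smul_apply, smul_eq_mul]
        positivity
      · have : ∑ i, (s • x + t • y) i / (lam i : ℝ)
            = s * ∑ i, x i / (lam i : ℝ) + t * ∑ i, y i / (lam i : ℝ) := by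
          rw [Finset.mul_sum, Finset.mul_sum, ← Finset.sum_add_distrib]
          refine Finset.sum_congr rfl fun i _ => ?_
          simp only [Pi.add_apply, Pi.smul_apply, smul_eq_mul]
          ring
        rw [this]
        nlinarith [hx.2, hy.2]
    refine convexHull_min ?_ hconv hx
    intro y hy
    rcases hy with rfl | ⟨i, rfl⟩
    · simp
    · refine ⟨fun j => ?_, ?_⟩
      · by_cases hj : j = i
        · subst hj; simp
        · simp [Pi.single_eq_of_ne hj]
      · rw [Finset.sum_eq_single i]
        · simpa using div_self_le_one (lam i : ℝ)
        · intro j _ hj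
          simp [Pi.single_eq_of_ne hj]
        · simp
  · rintro ⟨h0, h1⟩
    have key := (convex_convexHull ℝ (insert (0 : Fin n → ℝ)
      (Set.range fun i => Pi.single i ((lam i : ℝ))))).sum_mem
      (t := (Finset.univ : Finset (Option (Fin n))))
      (w := fun o => o.elim (1 - ∑ i, x i / (lam i : ℝ)) (fun i => x i / (lam i : ℝ)))
      (z := fun o => o.elim 0 (fun i => Pi.single i ((lam i : ℝ))))
      (by
        rintro (_ | i) _
        · simpa using h1
        · exact div_nonneg (h0 i) (Nat.cast_nonneg _))
      (by rw [Fintype.sum_option]; simp)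
      (by
        rintro (_ | i) _
        · exact subset_convexHull _ _ (Set.mem_insert _ _)
        · exact subset_convexHull _ _ (Set.mem_insert_of_mem _ ⟨i, rfl⟩))
    rw [Fintype.sum_option] at key
    have hxe : x = ∑ i, (x i / (lam i : ℝ)) • (Pi.single i (lam i : ℝ) : Fin n → ℝ) := by
      ext j
      rw [Finset.sum_apply, Finset.sum_eq_single j]
      · have : (lam j : ℝ) ≠ 0 := by exact_mod_cast (hl j).ne'
        simp [this]
      · intro i _ hi
        simp [Pi.single_eq_of_ne hi.symm]
      · simp
    unfold rectSimplex
    rw [hxe]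
    simpa using key

lemma mem_dil {n : ℕ} (lam : Fin n → ℕ) (hl : ∀ i, 0 < lam i) (k : ℕ) (hk : 0 < k)
    (x : Fin n → ℝ) :
    x ∈ dilate k (rectSimplex lam) ↔ (∀ i, 0 ≤ x i) ∧ ∑ i, x i / (lam i : ℝ) ≤ k := by
  have hk' : (0 : ℝ) < k := by exact_mod_cast hk
  have hs : ∀ y : Fin n → ℝ, ∑ i, ((k : ℝ) • y) i / (lam i : ℝ) = k * ∑ i, y i / (lam i : ℝ) := by
    intro y
    rw [Finset.mul_sum]
    refine Finset.sum_congr rfl fun i _ => ?_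
    simp only [Pi.smul_apply, smul_eq_mul]
    ring
  constructor
  · rintro ⟨y, hy, rfl⟩
    rw [mem_rect lam hl] at hy
    refine ⟨fun i => ?_, ?_⟩
    · have := hy.1 i
      simp only [Pi.smul_apply, smul_eq_mul]
      positivity
    · simp only [hs]
      nlinarith [hy.2]
  · rintro ⟨h0, h1⟩
    have hx : x = (k : ℝ) • ((k : ℝ)⁻¹ • x) := by rw [smul_smul, mul_inv_cancel₀ hk'.ne', one_smul]
    refine ⟨(k : ℝ)⁻¹ • x, ?_, hx.symm⟩
    rw [mem_rect lam hl]
    refine ⟨fun i => ?_, ?_⟩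
    · have := h0 i
      simp only [Pi.smul_apply, smul_eq_mul]
      positivity
    · rw [hx, hs] at h1
      nlinarith

lemma dil_dil {n : ℕ} (m k : ℕ) (P : Set (Fin n → ℝ)) :
    dilate m (dilate k P) = dilate (m * k) P := by
  unfold dilate
  rw [Set.image_image]
  simp [smul_smul]

lemma to_nat {n : ℕ} (x : Fin n → ℝ) (h0 : ∀ i, 0 ≤ x i) (hx : IsLatticePoint x) :
    ∃ a : Fin n → ℕ, x = fun i => (a i : ℝ) := by
  choose z hz using hx
  refine ⟨fun i => (z i).toNat, funext fun i => ?_⟩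
  have h : (0 : ℤ) ≤ z i := by
    have := h0 i
    rw [hz] at this
    exact_mod_cast this
  rw [hz]
  exact_mod_cast (Int.toNat_of_nonneg h).symm

lemma normal_big {n : ℕ} (lam : Fin n → ℕ) (hl : ∀ i, 0 < lam i) (k : ℕ) (hk : 0 < k)
    (hnk : n ≤ k + 1) : IsNormal (dilate k (rectSimplex lam)) := by
  intro m hm x hx hlat
  rw [dil_dil, mem_dil lam hl _ (by positivity)] at hx
  obtain ⟨a, rfl⟩ := to_nat x hx.1 hlat
  obtain ⟨m, rfl⟩ : ∃ m', m = m' + 1 := ⟨m - 1, by omega⟩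
  obtain ⟨f, hf, hs⟩ := decomp lam hl k hnk m a (by have := hx.2; push_cast at this; exact this)
  refine ⟨fun i j => (f i j : ℝ), fun i => ⟨?_, fun j => ⟨f i j, by simp⟩⟩, ?_⟩
  · rw [mem_dil lam hl _ hk]
    exact ⟨fun j => Nat.cast_nonneg _, hf i⟩
  · ext j
    rw [hs]
    simp [Finset.sum_apply]

/-- The integral weight `∑ yᵢ ∏_{j ≠ i} λⱼ`. -/
def SS {n : ℕ} (lam y : Fin n → ℕ) : ℕ := ∑ i, y i * ∏ j ∈ Finset.univ.erase i, lam j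

lemma SS_eq {n : ℕ} (lam : Fin n → ℕ) (hl : ∀ i, 0 < lam i) (y : Fin n → ℕ) :
    (SS lam y : ℝ) = sg lam y * (∏ i, lam i : ℕ) := by
  unfold SS sg
  rw [Finset.sum_mul]
  push_cast
  refine Finset.sum_congr rfl fun i _ => ?_
  have : (lam i : ℝ) ≠ 0 := by exact_mod_cast (hl i).ne'
  rw [← Finset.mul_prod_erase Finset.univ (fun j => (lam j : ℝ)) (Finset.mem_univ i)]
  field_simp

lemma SS_dvd {n : ℕ} (lam : Fin n → ℕ) (hc : ∀ i j, i ≠ j → Nat.Coprime (lam i) (lam j))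
    (y : Fin n → ℕ) (c : ℕ) (h : SS lam y = c * ∏ i, lam i) (i : Fin n) : lam i ∣ y i := by
  unfold SS at h
  rw [← Finset.add_sum_erase _ _ (Finset.mem_univ i)] at h
  have h1 : lam i ∣ ∑ x ∈ Finset.univ.erase i, y x * ∏ j ∈ Finset.univ.erase x, lam j := by
    refine Finset.dvd_sum fun x hx => Dvd.dvd.mul_left (Finset.dvd_prod_of_mem _ ?_) _
    simp only [Finset.mem_erase, Finset.mem_univ, and_true] at hx ⊢
    exact hx.symm
  have h2 : lam i ∣ c * ∏ i, lam i :=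
    Dvd.dvd.mul_left (Finset.dvd_prod_of_mem _ (Finset.mem_univ i)) _
  rw [← h] at h2
  have h3 := (Nat.dvd_add_left h1).1 h2
  refine Nat.Coprime.dvd_of_dvd_mul_right ?_ h3
  refine Nat.Coprime.prod_right fun j hj => hc i j ?_
  simp only [Finset.mem_erase, Finset.mem_univ, and_true] at hj
  exact hj.symm

lemma no_int {m : ℕ} (p : Fin (m + 2) → ℕ) (q : ℕ) (lam : Fin (m + 3) → ℕ)
    (hl : ∀ i, 0 < lam i) (hc : ∀ i j, i ≠ j → Nat.Coprime (lam i) (lam j))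
    (hlp : ∀ i : Fin (m + 2), lam i.castSucc = p i) (hlq : lam (Fin.last _) = q)
    (y : Fin (m + 3) → ℕ) (hy1 : ∀ i : Fin (m + 2), y i.castSucc < p i)
    (hy2 : y (Fin.last _) < (m + 1) * q) (hS : SS lam y = (m + 1) * ∏ i, lam i) : False := by
  have hd := SS_dvd lam hc y _ hS
  have h0 : ∀ i : Fin (m + 2), y i.castSucc = 0 := fun i =>
    Nat.eq_zero_of_dvd_of_lt (hd i.castSucc) (by rw [hlp]; exact hy1 i)
  unfold SS at hS
  rw [Fin.sum_univ_castSucc] at hS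
  simp only [h0, zero_mul, Finset.sum_const_zero, zero_add] at hS
  rw [← Finset.mul_prod_erase Finset.univ lam (Finset.mem_univ (Fin.last _)), hlq,
    ← mul_assoc] at hS
  have hpos : 0 < ∏ j ∈ Finset.univ.erase (Fin.last (m + 2)), lam j :=
    Finset.prod_pos fun i _ => hl i
  have := Nat.eq_of_mul_eq_mul_right hpos hS
  omega

lemma not_normal {m : ℕ} (p : Fin (m + 2) → ℕ) (q z : ℕ) (lam : Fin (m + 3) → ℕ)
    (hl : ∀ i, 0 < lam i) (hc : ∀ i j, i ≠ j → Nat.Coprime (lam i) (lam j))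
    (hlp : ∀ i : Fin (m + 2), lam i.castSucc = p i) (hlq : lam (Fin.last _) = q)
    (hzq : z < q)
    (hz : q * SS p (fun _ => 1) = 1 + (∏ i, p i) * z) :
    ¬ IsNormal (dilate (m + 1) (rectSimplex lam)) := by
  intro hN
  have hpp : ∀ i, 0 < p i := fun i => by rw [← hlp]; exact hl _
  have hq : 0 < q := by omega
  set X : Fin (m + 3) → ℕ := Fin.snoc (α := fun _ => ℕ) (fun i => p i - 1) (z + m * q) with hX
  set L : ℕ := ∏ i, lam i with hL
  have hLpos : 0 < L := Finset.prod_pos fun i _ => hl i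
  have hLR : (0 : ℝ) < L := by exact_mod_cast hLpos
  have hLe : L = (∏ i, p i) * q := by
    rw [hL, Fin.prod_univ_castSucc, hlq]
    simp only [hlp]
  have hXc : ∀ i : Fin (m + 2), X i.castSucc = p i - 1 := fun i => by simp [hX]
  have hXl : X (Fin.last _) = z + m * q := by simp [hX]
  have hsgX : sg lam X * L + 1 = 2 * (m + 1) * L := by
    have h1 := SS_eq p hpp (fun _ => 1)
    have h2 : sg lam X = (m + 2) - sg p (fun _ => 1) + (z + m * q) / q := by
      unfold sg
      rw [Fin.sum_univ_castSucc, hXl, hlq]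
      push_cast
      congr 1
      have : ((m : ℝ) + 2) = ∑ i : Fin (m + 2), (1 : ℝ) := by simp
      rw [this, ← Finset.sum_sub_distrib]
      refine Finset.sum_congr rfl fun i _ => ?_
      have h3 : (p i : ℝ) ≠ 0 := by exact_mod_cast (hpp i).ne'
      rw [hXc, hlp, Nat.cast_sub (hpp i)]
      field_simp
      simp
    have h4 : (q : ℝ) * SS p (fun _ => 1) = 1 + (∏ i, p i : ℕ) * z := by exact_mod_cast hz
    have h5 : (q : ℝ) ≠ 0 := by exact_mod_cast hq.ne'
    rw [h1] at h4
    rw [h2, hLe]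
    push_cast at h4 ⊢
    field_simp
    linear_combination -h4
  have hSSX : SS lam X + 1 = 2 * (m + 1) * L := by
    have := SS_eq lam hl X
    rw [← hL] at this
    rw [← this] at hsgX
    exact_mod_cast hsgX
  have hmem : (fun i => (X i : ℝ)) ∈ dilate 2 (dilate (m + 1) (rectSimplex lam)) := by
    rw [dil_dil, mem_dil lam hl _ (by positivity)]
    refine ⟨fun i => Nat.cast_nonneg _, ?_⟩
    change sg lam X ≤ _
    push_cast
    nlinarith
  obtain ⟨f, hf, hs⟩ := hN 2 (by norm_num) _ hmem (fun i => ⟨X i, by simp⟩)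
  rw [Fin.sum_univ_two] at hs
  have hf' : ∀ t, ∃ a : Fin (m + 3) → ℕ, f t = (fun i => (a i : ℝ)) ∧ SS lam a ≤ (m + 1) * L := by
    intro t
    obtain ⟨h1, h2⟩ := hf t
    rw [mem_dil lam hl _ (by positivity)] at h1
    obtain ⟨a, ha⟩ := to_nat _ h1.1 h2
    refine ⟨a, ha, ?_⟩
    have h3 : sg lam a ≤ (m + 1 : ℕ) := by
      have := h1.2
      rw [ha] at this
      exact this
    have h4 := SS_eq lam hl a
    rw [← hL] at h4
    have : (SS lam a : ℝ) ≤ (m + 1 : ℕ) * L := by rw [h4]; gcongr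
    exact_mod_cast this
  obtain ⟨y, hy, hyS⟩ := hf' 0
  obtain ⟨w, hw, hwS⟩ := hf' 1
  have hXyw : ∀ i, X i = y i + w i := by
    intro i
    have := congrFun hs i
    rw [hy, hw] at this
    simp only [Pi.add_apply] at this
    exact_mod_cast this
  have hadd : SS lam X = SS lam y + SS lam w := by
    unfold SS
    rw [← Finset.sum_add_distrib]
    exact Finset.sum_congr rfl fun i _ => by rw [hXyw, add_mul]
  have hcase : SS lam y = (m + 1) * L ∨ SS lam w = (m + 1) * L := by
    rw [mul_assoc] at hSSX
    omega
  have hlast := hXyw (Fin.last _)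
  rw [hXl] at hlast
  have hexp : (m + 1) * q = m * q + q := by ring
  rcases hcase with h | h
  · refine no_int p q lam hl hc hlp hlq y (fun i => ?_) (by omega) h
    have h1 := hXyw i.castSucc
    have h2 := hpp i
    rw [hXc] at h1
    omega
  · refine no_int p q lam hl hc hlp hlq w (fun i => ?_) (by omega) h
    have h1 := hXyw i.castSucc
    have h2 := hpp i
    rw [hXc] at h1
    omega

lemma munorm_eq {m : ℕ} (p : Fin (m + 2) → ℕ) (q z : ℕ) (lam : Fin (m + 3) → ℕ)
    (hl : ∀ i, 0 < lam i) (hc : ∀ i j, i ≠ j → Nat.Coprime (lam i) (lam j))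
    (hlp : ∀ i : Fin (m + 2), lam i.castSucc = p i) (hlq : lam (Fin.last _) = q)
    (hzq : z < q)
    (hz : q * SS p (fun _ => 1) = 1 + (∏ i, p i) * z) :
    munorm (rectSimplex lam) = m + 2 := by
  have hmem : m + 2 ∈ {k₀ : ℕ | ∀ k : ℕ, k₀ ≤ k → IsNormal (dilate k (rectSimplex lam))} :=
    fun k hk => normal_big lam hl k (by omega) (by omega)
  refine le_antisymm (Nat.sInf_le hmem) (le_csInf ⟨_, hmem⟩ fun k hk => ?_)
  by_contra hcon
  exact not_normal p q z lam hl hc hlp hlq hzq hz (hk (m + 1) (by omega))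

/-- Let `n ≥ 3` and `p₁, …, p_{n-1}` be distinct primes with
`∑ 1/pᵢ ≤ 1`. Then the set of primes `q ∉ {p₁, …, p_{n-1}}` such that
`Δ(p₁, …, p_{n-1}, q)` is maximally non-normal is infinite. -/
theorem stmt_17 (n : ℕ) (hn : 3 ≤ n) (p : Fin (n - 1) → ℕ) (hp : ∀ i, (p i).Prime)
    (hinj : Function.Injective p)
    (hsum : ∑ i, (1 : ℝ) / (p i : ℝ) ≤ 1) :
    {q : ℕ | q.Prime ∧ q ∉ Set.range p ∧
      munorm (rectSimplex (fun i : Fin n =>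
        if h : (i : ℕ) < n - 1 then p ⟨(i : ℕ), h⟩ else q)) = n - 1}.Infinite := by
  obtain ⟨m, rfl⟩ : ∃ m, n = m + 3 := ⟨n - 3, by omega⟩
  change Fin (m + 2) → ℕ at p
  have hpp : ∀ i, 0 < p i := fun i => (hp i).pos
  have hcp : ∀ i j, i ≠ j → Nat.Coprime (p i) (p j) := fun i j hij =>
    (Nat.coprime_primes (hp i) (hp j)).2 fun h => hij (hinj h)
  set P : ℕ := ∏ i : Fin (m + 2), p i with hP
  set A : ℕ := SS p (fun _ => 1) with hA
  have hPpos : 0 < P := Finset.prod_pos fun i _ => hpp i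
  have : NeZero P := ⟨hPpos.ne'⟩
  have hAP : A ≤ P := by
    have h1 := SS_eq p hpp (fun _ => 1)
    have h2 : sg p (fun _ => 1) ≤ 1 := by
      unfold sg
      simpa using hsum
    have h3 : (A : ℝ) ≤ P := by
      rw [hA, h1, ← hP]
      have : (0 : ℝ) ≤ P := Nat.cast_nonneg _
      nlinarith
    exact_mod_cast h3
  have hcop : Nat.Coprime A P := by
    refine Nat.Coprime.prod_right fun i _ => ?_
    refine ((Nat.Prime.coprime_iff_not_dvd (hp i)).2 fun hd => ?_).symm
    rw [hA] at hd
    unfold SS at hd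
    rw [← Finset.add_sum_erase _ _ (Finset.mem_univ i)] at hd
    have h1 : p i ∣ ∑ x ∈ Finset.univ.erase i, 1 * ∏ j ∈ Finset.univ.erase x, p j := by
      refine Finset.dvd_sum fun x hx => Dvd.dvd.mul_left (Finset.dvd_prod_of_mem _ ?_) _
      simp only [Finset.mem_erase, Finset.mem_univ, and_true] at hx ⊢
      exact hx.symm
    have h2 := (Nat.dvd_add_left h1).1 hd
    rw [one_mul, (hp i).prime.dvd_finsetProd_iff] at h2
    obtain ⟨j, hj, hj2⟩ := h2
    simp only [Finset.mem_erase, Finset.mem_univ, and_true] at hj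
    exact hj (hinj ((Nat.prime_dvd_prime_iff_eq (hp i) (hp j)).1 hj2)).symm
  refine Set.infinite_of_forall_exists_gt fun B => ?_
  have hu : IsUnit ((A : ZMod P)) := (ZMod.isUnit_iff_coprime A P).2 hcop
  obtain ⟨q, hqB, hq, hqA⟩ := Nat.forall_exists_prime_gt_and_eq_mod (q := P)
    (a := ((hu.unit⁻¹ : (ZMod P)ˣ) : ZMod P)) (Units.isUnit _) (B + P)
  have hpq : ∀ i, p i < q := fun i => by
    have : p i ≤ P := Nat.le_of_dvd hPpos (Finset.dvd_prod_of_mem _ (Finset.mem_univ i))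
    omega
  have hmod : ((q * A : ℕ) : ZMod P) = ((1 : ℕ) : ZMod P) := by
    push_cast
    rw [hqA]
    exact hu.val_inv_mul
  have hApos : 0 < A := by
    rcases Nat.eq_zero_or_pos A with h | h
    · rw [h, Nat.coprime_zero_left] at hcop
      have h1 : p (0 : Fin (m + 2)) ∣ P := Finset.dvd_prod_of_mem _ (Finset.mem_univ _)
      rw [hcop] at h1
      exact absurd (Nat.dvd_one.1 h1) (hp (0 : Fin (m + 2))).one_lt.ne'
    · exact h
  have hqApos : 1 ≤ q * A := Nat.mul_pos hq.pos hApos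
  have hdvd : P ∣ q * A - 1 :=
    (Nat.modEq_iff_dvd' hqApos).1 ((ZMod.natCast_eq_natCast_iff _ _ _).1 hmod).symm
  obtain ⟨z, hz⟩ := hdvd
  have hz' : q * A = 1 + P * z := by omega
  have hzq : z < q := by
    have : q * A ≤ q * P := Nat.mul_le_mul_left _ hAP
    by_contra hcon
    have : P * q ≤ P * z := Nat.mul_le_mul_left _ (not_lt.1 hcon)
    have : P * q = q * P := mul_comm _ _
    omega
  refine ⟨q, ⟨hq, ?_, ?_⟩, by omega⟩
  · rintro ⟨i, hi⟩
    have := hpq i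
    exact absurd hi this.ne
  · set lam : Fin (m + 3) → ℕ := (fun i : Fin (m + 3) =>
        if h : (i : ℕ) < m + 3 - 1 then p ⟨(i : ℕ), h⟩ else q) with hlam
    have hlp : ∀ i : Fin (m + 2), lam i.castSucc = p i := by
      intro i
      have : (i : ℕ) < m + 3 - 1 := i.2
      simp [hlam]
    have hlq : lam (Fin.last _) = q := by simp [hlam]
    have hqc : ∀ i, Nat.Coprime (p i) q := fun i =>
      (Nat.coprime_primes (hp i) hq).2 (hpq i).ne
    refine munorm_eq p q z lam ?_ ?_ hlp hlq hzq hz'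
    · intro i
      refine Fin.lastCases ?_ (fun i => ?_) i
      · rw [hlq]; exact hq.pos
      · rw [hlp]; exact hpp i
    · intro i j
      refine Fin.lastCases ?_ (fun i => ?_) i
      · refine Fin.lastCases ?_ (fun j => ?_) j
        · intro h; exact absurd rfl h
        · intro _; rw [hlp, hlq]; exact (hqc j).symm
      · refine Fin.lastCases ?_ (fun j => ?_) j
        · intro _; rw [hlp, hlq]; exact hqc i
        · intro h
          rw [hlp, hlp]
          exact hcp i j fun h' => h (by rw [h'])
end
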